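/- arXiv:2505.09270 — 3 statements merged into one kernel-verified Lean document; each statement's English description precedes it below -/
import Mathlib

section
/- Let n ≥ 1, ξ ∈ ℝⁿ, and for ℓ ∈ ℕ define the bounded operator Π_ℓ^ξ on L²(ℝⁿ, ℂ) by Π_ℓ^ξ u = Σ_{α ∈ ℕⁿ, |α| = ℓ} (∫_{ℝⁿ} conj(ψ_α^{−ξ}(w))·u(w) dw) · ψ_α^ξ, where ψ_α^ξ(v) = ∏_{j=1}^n φ_{α_j}(v_j + 2iξ_j). Then for all k, ℓ ∈ ℕ, Π_k^ξ ∘ Π_ℓ^ξ = δ_{kℓ} · Π_ℓ^ξ as operators on L²(ℝⁿ, ℂ); that is, the maps Π_ℓ^ξ are projections with mutually annihilating ranges. -/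
open MeasureTheory

/-- The normalized Hermite function `φ_j(z) = (j!·√(2π))^(−1/2)·exp(−z²/4)·F_j(z)`,
extended to an entire function on `ℂ`. -/
noncomputable def hermiteFun (j : ℕ) (z : ℂ) : ℂ :=
  ((((j.factorial : ℝ) * Real.sqrt (2 * Real.pi)) ^ (-(1 : ℝ) / 2) : ℝ) : ℂ) *
    Complex.exp (-z ^ 2 / 4) * Polynomial.aeval z (Polynomial.hermite j)

/-- `ψ_α^ξ(v) = ∏_j φ_{α_j}(v_j + 2iξ_j)`. -/
noncomputable def psiFun {n : ℕ} (α : Fin n → ℕ) (ξ : Fin n → ℝ) (v : Fin n → ℝ) : ℂ :=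
  ∏ j, hermiteFun (α j) ((v j : ℂ) + 2 * Complex.I * (ξ j : ℂ))

/-- The Riesz projection `Π_ℓ^ξ u = Σ_{|α| = ℓ} ⟨ψ_α^{−ξ}, u⟩ ψ_α^ξ`. -/
noncomputable def rieszProj (n : ℕ) (ξ : Fin n → ℝ) (ℓ : ℕ)
    (u : (Fin n → ℝ) → ℂ) : (Fin n → ℝ) → ℂ :=
  fun v => ∑ α ∈ Finset.Nat.antidiagonalTuple n ℓ,
    (∫ w : Fin n → ℝ, (starRingEnd ℂ) (psiFun α (-ξ) w) * u w) * psiFun α ξ v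

/-!
Since `conj ψ_α^{-ξ} = ψ_α^ξ` on `ℝⁿ`, biorthogonality of `ψ^{-ξ}` and `ψ^ξ` says that the integral
of `ψ_α^ξ ψ_β^ξ`, without a conjugate, is `δ_{αβ}`. This factors into one-dimensional integrals of
`φ_a φ_b` over the horizontal line `ℝ + 2iξ_j`. The functional `L P = ∫ exp (-z ^ 2 / 2) P(z) dz`
on any such line satisfies `L (X P) = L P'` by integration by parts, so `L (F_a P) = L (P^(a))`
for the Hermite polynomial `F_a`, whence `L (F_a F_b) = a! δ_{ab} L 1` and `L 1 = √(2π)`.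
-/

section HermiteAlgebra

open Polynomial
open scoped Nat

lemma iterate_derivative_natDegree {R : Type*} [Semiring R] (P : R[X]) :
    derivative^[P.natDegree] P = C (P.natDegree ! • P.leadingCoeff) := by
  ext k
  rw [coeff_iterate_derivative, coeff_C]
  rcases Nat.eq_zero_or_pos k with rfl | hk
  · simp [Nat.descFactorial_self]
  · rw [coeff_eq_zero_of_natDegree_lt (by omega), smul_zero, if_neg hk.ne']

variable {M : Type*} [AddCommGroup M] {L : ℤ[X] →+ M}

lemma map_hermite_mul_of_map_X_mul (hL : ∀ P, L (X * P) = L (derivative P)) (m : ℕ) (P : ℤ[X]) :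
    L (hermite m * P) = L (derivative^[m] P) := by
  induction m generalizing P with
  | zero => simp
  | succ m ih =>
    calc L (hermite (m + 1) * P)
        = L (X * (hermite m * P)) - L (derivative (hermite m) * P) := by
          rw [← map_sub, hermite_succ, sub_mul, mul_assoc]
      _ = L (hermite m * derivative P) := by
          rw [hL, derivative_mul, map_add, add_sub_cancel_left]
      _ = L (derivative^[m + 1] P) := by rw [ih, Function.iterate_succ_apply]

lemma map_hermite_mul_hermite_of_map_X_mul (hL : ∀ P, L (X * P) = L (derivative P)) (a b : ℕ) :
    L (hermite a * hermite b) = if a = b then a ! • L 1 else 0 := by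
  wlog hab : b ≤ a generalizing a b
  · rw [mul_comm, this b a (by omega), if_neg (by omega), if_neg (by omega)]
  rw [map_hermite_mul_of_map_X_mul hL]
  rcases hab.eq_or_lt with rfl | hlt
  · have := iterate_derivative_natDegree (hermite b)
    rw [natDegree_hermite, leadingCoeff_hermite] at this
    rw [this, if_pos rfl, map_nsmul C, map_nsmul, C_1]
  · rw [iterate_derivative_eq_zero (by rwa [natDegree_hermite]), map_zero, if_neg hlt.ne']

end HermiteAlgebra

section GaussianIntegrals

open Complex Polynomial
open scoped Nat Real

/- The factor `x ^ k` is dominated by `k! * (exp x + exp (-x))`, which only shifts the linear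
coefficient of the exponent. -/
lemma integrable_pow_mul_cexp_quadratic {b : ℂ} (hb : b.re < 0) (c d : ℂ) (k : ℕ) :
    Integrable fun x : ℝ => (x : ℂ) ^ k * cexp (b * x ^ 2 + c * x + d) := by
  have hdom := (((integrable_cexp_quadratic' hb (c + 1) d).norm.add
    (integrable_cexp_quadratic' hb (c - 1) d).norm).const_mul (k ! : ℝ))
  refine hdom.mono' (by fun_prop) (.of_forall fun x => ?_)
  have hplus : cexp (b * x ^ 2 + (c + 1) * x + d) = cexp (b * x ^ 2 + c * x + d) * cexp x := by
    rw [← Complex.exp_add]; ring_nf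
  have hminus : cexp (b * x ^ 2 + (c - 1) * x + d) =
      cexp (b * x ^ 2 + c * x + d) * cexp (-x : ℝ) := by
    rw [← Complex.exp_add]; push_cast; ring_nf
  have hpow : |x| ^ k ≤ k ! * (Real.exp x + Real.exp (-x)) :=
    calc |x| ^ k ≤ k ! * Real.exp |x| :=
          (div_le_iff₀' (by positivity)).mp (Real.pow_div_factorial_le_exp |x| (abs_nonneg x) k)
      _ ≤ k ! * (Real.exp x + Real.exp (-x)) := by gcongr; exact Real.exp_abs_le x
  simp only [Pi.add_apply, hplus, hminus, norm_mul, norm_pow, norm_real, Real.norm_eq_abs,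
    norm_exp_ofReal]
  calc |x| ^ k * ‖cexp (b * x ^ 2 + c * x + d)‖
      ≤ (k ! * (Real.exp x + Real.exp (-x))) * ‖cexp (b * x ^ 2 + c * x + d)‖ := by gcongr
    _ = _ := by ring

lemma integrable_eval_mul_cexp_quadratic {b : ℂ} (hb : b.re < 0) (c d : ℂ) (P : ℂ[X]) :
    Integrable fun x : ℝ => P.eval (x : ℂ) * cexp (b * x ^ 2 + c * x + d) := by
  simp only [eval_eq_sum_range, Finset.sum_mul, mul_assoc]
  exact integrable_finsetSum _ fun k _ =>
    (integrable_pow_mul_cexp_quadratic hb c d k).const_mul _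

/-- The polynomial `P` times the Gaussian weight `exp (-z ^ 2 / 2)` for which the probabilists'
Hermite polynomials are orthogonal. Coefficients are integers as in `Polynomial.hermite`. -/
noncomputable def gaussianMul (P : ℤ[X]) (z : ℂ) : ℂ :=
  cexp (-z ^ 2 / 2) * aeval z P

lemma gaussianMul_add (P Q : ℤ[X]) (z : ℂ) :
    gaussianMul (P + Q) z = gaussianMul P z + gaussianMul Q z := by
  simp only [gaussianMul, map_add, mul_add]

lemma integrable_gaussianMul (c : ℂ) (P : ℤ[X]) :
    Integrable fun x : ℝ => gaussianMul P (x + c) := by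
  refine (integrable_eval_mul_cexp_quadratic (b := -1 / 2) (by norm_num) (-c) (-c ^ 2 / 2)
    ((P.map (algebraMap ℤ ℂ)).comp (X + C c))).congr (.of_forall fun x => ?_)
  have hexponent : -1 / 2 * (x : ℂ) ^ 2 + -c * x + -c ^ 2 / 2 = -(x + c) ^ 2 / 2 := by ring
  simp only [gaussianMul, eval_comp, eval_add, eval_X, eval_C, eval_map_algebraMap]
  rw [hexponent, mul_comm]

lemma hasDerivAt_gaussianMul (P : ℤ[X]) (z : ℂ) :
    HasDerivAt (gaussianMul P) (gaussianMul (derivative P - X * P) z) z := by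
  have hweight : HasDerivAt (fun z : ℂ => cexp (-z ^ 2 / 2)) (cexp (-z ^ 2 / 2) * -z) z := by
    refine ((hasDerivAt_pow 2 z).neg.div_const 2).cexp.congr_deriv ?_
    simp only [Pi.neg_apply]
    push_cast
    ring
  refine (hweight.mul (P.hasDerivAt_aeval z)).congr_deriv ?_
  simp only [gaussianMul, map_sub, map_mul, aeval_X]
  ring

/-- The functional `P ↦ ∫ exp (-z ^ 2 / 2) P(z) dz` over the horizontal line `ℝ + c`. -/
noncomputable def gaussianFunctional (c : ℂ) : ℤ[X] →+ ℂ :=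
  AddMonoidHom.mk' (fun P => ∫ x : ℝ, gaussianMul P (x + c)) fun P Q => by
    simp only [gaussianMul_add]
    exact integral_add (integrable_gaussianMul c P) (integrable_gaussianMul c Q)

lemma gaussianFunctional_apply (c : ℂ) (P : ℤ[X]) :
    gaussianFunctional c P = ∫ x : ℝ, gaussianMul P (x + c) := rfl

lemma gaussianFunctional_X_mul (c : ℂ) (P : ℤ[X]) :
    gaussianFunctional c (X * P) = gaussianFunctional c (derivative P) := by
  have hderiv (x : ℝ) : HasDerivAt (fun x : ℝ => gaussianMul P (x + c))
      (gaussianMul (derivative P - X * P) (x + c)) x :=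
    ((hasDerivAt_gaussianMul P (x + c)).comp_add_const (x : ℂ) c).comp_ofReal
  have hzero : gaussianFunctional c (derivative P - X * P) = 0 :=
    integral_eq_zero_of_hasDerivAt_of_integrable hderiv (integrable_gaussianMul c _)
      (integrable_gaussianMul c P)
  rw [map_sub, sub_eq_zero] at hzero
  exact hzero.symm

lemma gaussianFunctional_one (c : ℂ) : gaussianFunctional c 1 = (√(2 * π) : ℝ) := by
  have hexponent (x : ℝ) :
      -((x : ℂ) + c) ^ 2 / 2 = -1 / 2 * (x : ℂ) ^ 2 + -c * x + -c ^ 2 / 2 := by ring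
  have hsqrt : ((√(2 * π) : ℝ) : ℂ) = (π / -(-1 / 2)) ^ (1 / 2 : ℂ) := by
    rw [Real.sqrt_eq_rpow, ofReal_cpow (by positivity)]
    push_cast
    ring_nf
  simp only [gaussianFunctional_apply, gaussianMul, map_one, mul_one, hexponent]
  have hvertex : -c ^ 2 / 2 - (-c) ^ 2 / (4 * (-1 / 2)) = 0 := by ring
  rw [integral_cexp_quadratic (by norm_num), hsqrt, hvertex, Complex.exp_zero, mul_one]

end GaussianIntegrals

section HermiteFunctions

open Complex Polynomial
open scoped Nat Real ComplexConjugate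

lemma rpow_neg_half_mul_self {y : ℝ} (hy : 0 < y) :
    y ^ (-(1 : ℝ) / 2) * y ^ (-(1 : ℝ) / 2) = y⁻¹ := by
  rw [← Real.rpow_add hy, add_halves, Real.rpow_neg_one]

lemma hermiteFun_mul_hermiteFun (a b : ℕ) (z : ℂ) :
    hermiteFun a z * hermiteFun b z =
      ((((a ! * √(2 * π)) ^ (-(1 : ℝ) / 2) * (b ! * √(2 * π)) ^ (-(1 : ℝ) / 2) : ℝ)) : ℂ) *
        gaussianMul (hermite a * hermite b) z := by
  have hexp : cexp (-z ^ 2 / 2) = cexp (-z ^ 2 / 4) * cexp (-z ^ 2 / 4) := by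
    rw [← Complex.exp_add]; ring_nf
  simp only [hermiteFun, gaussianMul, hexp, map_mul, ofReal_mul]
  ring

lemma integrable_hermiteFun_mul_hermiteFun (c : ℂ) (a b : ℕ) :
    Integrable fun x : ℝ => hermiteFun a (x + c) * hermiteFun b (x + c) := by
  simp only [hermiteFun_mul_hermiteFun]
  exact (integrable_gaussianMul c _).const_mul _

lemma integral_hermiteFun_mul_hermiteFun (c : ℂ) (a b : ℕ) :
    ∫ x : ℝ, hermiteFun a (x + c) * hermiteFun b (x + c) = if a = b then 1 else 0 := by
  simp only [hermiteFun_mul_hermiteFun]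
  rw [integral_const_mul, ← gaussianFunctional_apply,
    map_hermite_mul_hermite_of_map_X_mul (gaussianFunctional_X_mul c), gaussianFunctional_one]
  split_ifs with hab
  · subst hab
    have hpos : 0 < a ! * √(2 * π) := by positivity
    rw [rpow_neg_half_mul_self hpos, nsmul_eq_mul, ← ofReal_natCast, ← ofReal_mul, ← ofReal_mul,
      inv_mul_cancel₀ hpos.ne', ofReal_one]
  · rw [mul_zero]

lemma conj_hermiteFun (j : ℕ) (z : ℂ) : conj (hermiteFun j z) = hermiteFun j (conj z) := by
  have haeval : conj (aeval z (hermite j)) = aeval (conj z) (hermite j) :=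
    (aeval_algHom_apply (starRingEnd ℂ).toIntAlgHom z (hermite j)).symm
  simp only [hermiteFun, map_mul, conj_ofReal, haeval, ← Complex.exp_conj, map_div₀, map_neg,
    map_pow, map_ofNat]

variable {n : ℕ} (α β : Fin n → ℕ) (ξ : Fin n → ℝ)

lemma conj_psiFun (v : Fin n → ℝ) : conj (psiFun α ξ v) = psiFun α (-ξ) v := by
  simp only [psiFun, map_prod, conj_hermiteFun, map_add, map_mul, conj_ofReal, conj_I, map_ofNat,
    Pi.neg_apply, ofReal_neg, mul_neg, neg_mul]

lemma integrable_psiFun_mul_psiFun : Integrable fun w => psiFun α ξ w * psiFun β ξ w := by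
  simp only [psiFun, ← Finset.prod_mul_distrib]
  exact Integrable.fintype_prod fun j =>
    integrable_hermiteFun_mul_hermiteFun (2 * I * ξ j) (α j) (β j)

lemma integral_psiFun_mul_psiFun :
    ∫ w, psiFun α ξ w * psiFun β ξ w = if α = β then 1 else 0 := by
  simp only [psiFun, ← Finset.prod_mul_distrib]
  rw [integral_fintype_prod_volume_eq_prod fun j (x : ℝ) =>
    hermiteFun (α j) (x + 2 * I * ξ j) * hermiteFun (β j) (x + 2 * I * ξ j)]
  simp only [integral_hermiteFun_mul_hermiteFun, Finset.prod_ite_zero, Finset.prod_const_one,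
    Finset.mem_univ, true_imp_iff, funext_iff]

lemma integral_conj_psiFun_neg_mul_sum (s : Finset (Fin n → ℕ)) (c : (Fin n → ℕ) → ℂ) :
    ∫ w, conj (psiFun α (-ξ) w) * (∑ β ∈ s, c β • psiFun β ξ) w = if α ∈ s then c α else 0 := by
  simp only [conj_psiFun, neg_neg, Finset.sum_apply, Pi.smul_apply, smul_eq_mul, Finset.mul_sum,
    mul_left_comm _ (c _)]
  rw [integral_finsetSum _ fun β _ => (integrable_psiFun_mul_psiFun α β ξ).const_mul _]
  simp only [integral_const_mul, integral_psiFun_mul_psiFun, mul_ite, mul_one, mul_zero,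
    Finset.sum_ite_eq]

end HermiteFunctions

section RieszProjections

open scoped ComplexConjugate

variable {n : ℕ} (ξ : Fin n → ℝ)

lemma rieszProj_eq_sum (ℓ : ℕ) (u : (Fin n → ℝ) → ℂ) :
    rieszProj n ξ ℓ u = ∑ α ∈ Finset.Nat.antidiagonalTuple n ℓ,
      (∫ w, conj (psiFun α (-ξ) w) * u w) • psiFun α ξ := by
  ext v
  simp only [rieszProj, Finset.sum_apply, Pi.smul_apply, smul_eq_mul]

lemma rieszProj_sum_smul_psiFun (k : ℕ) (s : Finset (Fin n → ℕ)) (c : (Fin n → ℕ) → ℂ) :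
    rieszProj n ξ k (∑ α ∈ s, c α • psiFun α ξ) =
      ∑ α ∈ s with ∑ j, α j = k, c α • psiFun α ξ := by
  have hlevel : ({α ∈ s | ∑ j, α j = k} : Finset (Fin n → ℕ)) =
      {α ∈ Finset.Nat.antidiagonalTuple n k | α ∈ s} := by
    ext α
    simp only [Finset.mem_filter, Finset.Nat.mem_antidiagonalTuple, and_comm]
  simp only [rieszProj_eq_sum, integral_conj_psiFun_neg_mul_sum, ite_smul, zero_smul, hlevel,
    Finset.sum_filter]

theorem stmt_10_general (k ℓ : ℕ) (u : (Fin n → ℝ) → ℂ) :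
    rieszProj n ξ k (rieszProj n ξ ℓ u) = if k = ℓ then rieszProj n ξ ℓ u else 0 := by
  rw [rieszProj_eq_sum ξ ℓ u, rieszProj_sum_smul_psiFun]
  split_ifs with hkℓ
  · rw [Finset.filter_true_of_mem fun α hα => by
      rw [Finset.Nat.mem_antidiagonalTuple.mp hα, hkℓ]]
  · rw [Finset.filter_false_of_mem fun α hα => by
      rw [Finset.Nat.mem_antidiagonalTuple.mp hα]; exact Ne.symm hkℓ, Finset.sum_empty]

end RieszProjections

/-- `Π_k^ξ ∘ Π_ℓ^ξ = δ_{kℓ} Π_ℓ^ξ` on `L²(ℝⁿ, ℂ)`: the Riesz projections are projections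
with mutually annihilating ranges. -/
theorem stmt_10 (n : ℕ) (hn : 1 ≤ n) (ξ : Fin n → ℝ) (k ℓ : ℕ)
    (u : (Fin n → ℝ) → ℂ) (hu : MemLp u 2) :
    ∀ v : Fin n → ℝ,
      rieszProj n ξ k (rieszProj n ξ ℓ u) v =
        (if k = ℓ then 1 else 0) * rieszProj n ξ ℓ u v := by
  intro v
  rw [stmt_10_general, ite_mul, one_mul, zero_mul]
  split_ifs <;> rfl
end

section
/- Let n ≥ 1, and let α, a, b be real numbers with 0 < α < n, a < n/2, b < n/2 and a + b = α. Then there exists a constant C > 0 such that for all f, g ∈ L²(ℝⁿ), ∫∫_{ℝⁿ×ℝⁿ} |f(x)|·|g(y)| / (|x|^a · |x−y|^{n−α} · |y|^b) dx dy ≤ C·‖f‖_{L²}·‖g‖_{L²}. That is, the integral operator with the homogeneous kernel |x|^{−a}|x−y|^{−(n−α)}|y|^{−b} is bounded on L²(ℝⁿ). -/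
open MeasureTheory

/-!
Write `n = dim E`. The kernel `K(x, y) = ‖x‖^(-a) ‖x - y‖^(-(n - (a + b))) ‖y‖^(-b)` is homogeneous
of degree `-n`, which calls for Schur's test with the weight `w(x) = ‖x‖^(-n/(pq))`: then
`∫ K(x, y) w(y)^p dy` and `w(x)^p` are both homogeneous of degree `-n/q`, and symmetrically with
`p` and `q` exchanged. What remains is a bound for `∫ ‖x - y‖^(-β) ‖y‖^(-γ) dy`, by homogeneity only
for `‖x‖ = 2`. There the larger of `‖x - y‖` and `‖y‖` is at least `1`, so the integrand is
dominated by a function of the smaller one alone, which is integrable when `β, γ < n < β + γ`.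
-/

open Module Metric
open scoped ENNReal NNReal

section SchurTest

variable {X Y : Type*} [MeasurableSpace X] [MeasurableSpace Y] {μ : Measure X} {ν : Measure Y}
  {p q : ℝ} {K : X → Y → ℝ≥0∞} {u f : X → ℝ≥0∞} {v g : Y → ℝ≥0∞} {A B : ℝ≥0∞}

lemma lintegral_lintegral_mul_rpow_weight_ratio_le (hp : 0 ≤ p) (hK : ∀ x, AEMeasurable (K x) ν)
    (hv : AEMeasurable v ν) (hu_zero : ∀ᵐ x ∂μ, u x ≠ 0) (hu_top : ∀ᵐ x ∂μ, u x ≠ ∞)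
    (hA : ∀ᵐ x ∂μ, ∫⁻ y, K x y * v y ^ p ∂ν ≤ A * u x ^ p) (hf : AEMeasurable f μ) :
    ∫⁻ x, ∫⁻ y, K x y * (f x * (v y / u x)) ^ p ∂ν ∂μ ≤ A * ∫⁻ x, f x ^ p ∂μ := by
  rw [← lintegral_const_mul'' _ (hf.pow_const p)]
  refine lintegral_mono_ae ?_
  filter_upwards [hu_zero, hu_top, hA] with x hx_zero hx_top hx
  calc ∫⁻ y, K x y * (f x * (v y / u x)) ^ p ∂ν
      = ∫⁻ y, (f x / u x) ^ p * (K x y * v y ^ p) ∂ν := by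
        refine lintegral_congr fun y ↦ ?_
        rw [show f x * (v y / u x) = f x / u x * v y by simp only [div_eq_mul_inv]; ring,
          ENNReal.mul_rpow_of_nonneg _ _ hp]
        ring
    _ = (f x / u x) ^ p * ∫⁻ y, K x y * v y ^ p ∂ν :=
        lintegral_const_mul'' _ ((hK x).mul (hv.pow_const p))
    _ ≤ (f x / u x) ^ p * (A * u x ^ p) := by gcongr
    _ = A * f x ^ p := by
        rw [mul_left_comm, ← ENNReal.mul_rpow_of_nonneg _ _ hp,
          ENNReal.div_mul_cancel hx_zero hx_top]

lemma rpow_inv_mul_rpow (hp : 0 < p) (k c : ℝ≥0∞) : (k ^ p⁻¹ * c) ^ p = k * c ^ p := by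
  rw [ENNReal.mul_rpow_of_nonneg _ _ hp.le, ENNReal.rpow_inv_rpow hp.ne']

lemma mul_mul_eq_rpow_inv_mul_rpow_inv (hpq : p.HolderConjugate q) {s t : ℝ≥0∞}
    (hs_zero : s ≠ 0) (hs_top : s ≠ ∞) (ht_zero : t ≠ 0) (ht_top : t ≠ ∞) (k c d : ℝ≥0∞) :
    k * c * d = k ^ p⁻¹ * (c * (t / s)) * (k ^ q⁻¹ * (d * (s / t))) := by
  have hk : k ^ p⁻¹ * k ^ q⁻¹ = k := by
    rw [← ENNReal.rpow_add_of_nonneg _ _ hpq.inv_nonneg hpq.symm.inv_nonneg,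
      hpq.inv_add_inv_eq_one, ENNReal.rpow_one]
  have hratio : t / s * (s / t) = 1 := by
    rw [← mul_div_assoc, ENNReal.div_mul_cancel hs_zero hs_top, ENNReal.div_self ht_zero ht_top]
  calc k * c * d = (k ^ p⁻¹ * k ^ q⁻¹) * c * d * (t / s * (s / t)) := by
        rw [hk, hratio, mul_one]
    _ = k ^ p⁻¹ * (c * (t / s)) * (k ^ q⁻¹ * (d * (s / t))) := by ring

theorem lintegral_prod_mul_mul_le_of_schur [SFinite μ] [SFinite ν] (hpq : p.HolderConjugate q)
    (hK : Measurable K.uncurry) (hu : AEMeasurable u μ) (hv : AEMeasurable v ν)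
    (hu_zero : ∀ᵐ x ∂μ, u x ≠ 0) (hu_top : ∀ᵐ x ∂μ, u x ≠ ∞)
    (hv_zero : ∀ᵐ y ∂ν, v y ≠ 0) (hv_top : ∀ᵐ y ∂ν, v y ≠ ∞)
    (hA : ∀ᵐ x ∂μ, ∫⁻ y, K x y * v y ^ p ∂ν ≤ A * u x ^ p)
    (hB : ∀ᵐ y ∂ν, ∫⁻ x, K x y * u x ^ q ∂μ ≤ B * v y ^ q)
    (hf : AEMeasurable f μ) (hg : AEMeasurable g ν) :
    ∫⁻ z, K z.1 z.2 * f z.1 * g z.2 ∂μ.prod ν ≤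
      (A * ∫⁻ x, f x ^ p ∂μ) ^ (1 / p) * (B * ∫⁻ y, g y ^ q ∂ν) ^ (1 / q) := by
  let F : X × Y → ℝ≥0∞ := fun z ↦ K z.1 z.2 ^ p⁻¹ * (f z.1 * (v z.2 / u z.1))
  let G : X × Y → ℝ≥0∞ := fun z ↦ K z.1 z.2 ^ q⁻¹ * (g z.2 * (u z.1 / v z.2))
  have hF : AEMeasurable F (μ.prod ν) :=
    (hK.pow_const _).aemeasurable.mul (hf.comp_fst.mul (hv.comp_snd.div hu.comp_fst))
  have hG : AEMeasurable G (μ.prod ν) :=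
    (hK.pow_const _).aemeasurable.mul (hg.comp_snd.mul (hu.comp_fst.div hv.comp_snd))
  have hFG : (fun z ↦ K z.1 z.2 * f z.1 * g z.2) =ᵐ[μ.prod ν] F * G := by
    filter_upwards [Measure.quasiMeasurePreserving_fst.ae (hu_zero.and hu_top),
      Measure.quasiMeasurePreserving_snd.ae (hv_zero.and hv_top)] with z hu hv
    exact mul_mul_eq_rpow_inv_mul_rpow_inv hpq hu.1 hu.2 hv.1 hv.2 _ _ _
  have hF_le : ∫⁻ z, F z ^ p ∂μ.prod ν ≤ A * ∫⁻ x, f x ^ p ∂μ := by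
    simp only [F, rpow_inv_mul_rpow hpq.pos]
    exact (lintegral_prod_le _).trans <| lintegral_lintegral_mul_rpow_weight_ratio_le hpq.nonneg
      (fun x ↦ hK.of_uncurry_left.aemeasurable) hv hu_zero hu_top hA hf
  have hG_le : ∫⁻ z, G z ^ q ∂μ.prod ν ≤ B * ∫⁻ y, g y ^ q ∂ν := by
    rw [← lintegral_prod_swap]
    simp only [G, Prod.fst_swap, Prod.snd_swap, rpow_inv_mul_rpow hpq.symm.pos]
    exact (lintegral_prod_le _).trans <| lintegral_lintegral_mul_rpow_weight_ratio_le
      (K := fun y x ↦ K x y) hpq.symm.nonneg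
      (fun y ↦ hK.of_uncurry_right.aemeasurable) hu hv_zero hv_top hB hg
  calc ∫⁻ z, K z.1 z.2 * f z.1 * g z.2 ∂μ.prod ν
      = ∫⁻ z, (F * G) z ∂μ.prod ν := lintegral_congr_ae hFG
    _ ≤ (∫⁻ z, F z ^ p ∂μ.prod ν) ^ (1 / p) * (∫⁻ z, G z ^ q ∂μ.prod ν) ^ (1 / q) :=
        ENNReal.lintegral_mul_le_Lp_mul_Lq _ hpq hF hG
    _ ≤ _ := by
        gcongr
        exacts [hpq.one_div_nonneg, hpq.symm.one_div_nonneg]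

end SchurTest

section PowerConvolution

variable {E : Type*} [NormedAddCommGroup E]

/-- The broken power law: `‖z‖ ^ (-β)` in the unit ball and `‖z‖ ^ (-(β + γ))` outside of it. -/
noncomputable def brokenPower (β γ : ℝ) (z : E) : ℝ :=
  ‖z‖ ^ (-β) * max ‖z‖ 1 ^ (-γ)

lemma norm_rpow_mul_norm_rpow_le_brokenPower {β γ : ℝ} (hγ : 0 ≤ γ) {y z : E} (hyz : ‖y‖ ≤ ‖z‖)
    (hz : 1 ≤ ‖z‖) : ‖y‖ ^ (-β) * ‖z‖ ^ (-γ) ≤ brokenPower β γ y :=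
  mul_le_mul_of_nonneg_left
    (Real.rpow_le_rpow_of_nonpos (by positivity) (max_le hyz hz) (by linarith)) (by positivity)

variable [MeasurableSpace E]

/-- The convolution at `x` of the powers `‖·‖ ^ (-β)` and `‖·‖ ^ (-γ)` with respect to `μ`;
it may be infinite. -/
noncomputable def powerConvolution (μ : Measure E) (β γ : ℝ) (x : E) : ℝ≥0∞ :=
  ∫⁻ y, ENNReal.ofReal (‖x - y‖ ^ (-β) * ‖y‖ ^ (-γ)) ∂μ

variable [BorelSpace E] {μ : Measure E} {β γ : ℝ}

@[fun_prop]
lemma measurable_brokenPower : Measurable (brokenPower β γ : E → ℝ) := by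
  unfold brokenPower
  fun_prop

lemma powerConvolution_le_of_norm_eq_two [μ.IsAddLeftInvariant] [μ.IsNegInvariant]
    (hβ : 0 ≤ β) (hγ : 0 ≤ γ) {x : E} (hx : ‖x‖ = 2) :
    powerConvolution μ β γ x ≤
      ∫⁻ z, ENNReal.ofReal (brokenPower β γ z) ∂μ +
        ∫⁻ z, ENNReal.ofReal (brokenPower γ β z) ∂μ := by
  rw [← lintegral_sub_left_eq_self (fun z ↦ ENNReal.ofReal (brokenPower β γ z)) x,
    ← lintegral_add_left (by fun_prop)]
  refine lintegral_mono fun y ↦ ?_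
  have htri : 2 ≤ ‖x - y‖ + ‖y‖ := by simpa [hx] using norm_add_le (x - y) y
  rcases le_total ‖x - y‖ ‖y‖ with h | h
  · refine le_add_right (ENNReal.ofReal_le_ofReal ?_)
    exact norm_rpow_mul_norm_rpow_le_brokenPower hγ h (by linarith)
  · refine le_add_left (ENNReal.ofReal_le_ofReal ?_)
    rw [mul_comm]
    exact norm_rpow_mul_norm_rpow_le_brokenPower hβ h (by linarith)

variable [NormedSpace ℝ E] [FiniteDimensional ℝ E] [μ.IsAddHaarMeasure]

lemma integrableOn_compl_ball_norm_rpow_neg {r s : ℝ} (hr : 0 < r) (hs : finrank ℝ E < s) :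
    IntegrableOn (fun z : E ↦ ‖z‖ ^ (-s)) (ball 0 r)ᶜ μ := by
  have hs_pos : 0 < s := (Nat.cast_nonneg _).trans_lt hs
  refine ((integrable_one_add_norm hs).const_mul ((r⁻¹ + 1) ^ s)).integrableOn.mono'
    (measurable_norm.pow_const _).aestronglyMeasurable
    (ae_restrict_of_forall_mem measurableSet_ball.compl fun z hz ↦ ?_)
  have hz : r ≤ ‖z‖ := by simpa using hz
  have hz_pos : 0 < ‖z‖ := hr.trans_le hz
  have hle : 1 + ‖z‖ ≤ (r⁻¹ + 1) * ‖z‖ := by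
    have : 1 ≤ r⁻¹ * ‖z‖ := by rwa [inv_mul_eq_div, one_le_div hr]
    linarith
  rw [Real.norm_of_nonneg (by positivity)]
  calc ‖z‖ ^ (-s) = (r⁻¹ + 1) ^ s * ((r⁻¹ + 1) * ‖z‖) ^ (-s) := by
        rw [Real.mul_rpow (by positivity) hz_pos.le, ← mul_assoc,
          ← Real.rpow_add (by positivity), add_neg_cancel, Real.rpow_zero, one_mul]
    _ ≤ (r⁻¹ + 1) ^ s * (1 + ‖z‖) ^ (-s) := by
        gcongr ?_ * ?_
        exact Real.rpow_le_rpow_of_nonpos (by positivity) hle (neg_nonpos.2 hs_pos.le)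

lemma integrable_brokenPower [Nontrivial E] (hβ : β < finrank ℝ E) (hβγ : finrank ℝ E < β + γ) :
    Integrable (brokenPower β γ) μ := by
  rw [← integrableOn_univ, ← Set.union_compl_self (ball 0 1)]
  refine IntegrableOn.union ?_ ?_
  · refine integrableOn_ball_of_norm_le_rpow (C := 1) finrank_pos hβ
      (ae_restrict_of_forall_mem measurableSet_ball fun z hz ↦ ?_) (by fun_prop)
    have hz : ‖z‖ ≤ 1 := (mem_ball_zero_iff.1 hz).le
    rw [brokenPower, max_eq_right hz, Real.one_rpow, mul_one, one_mul,
      Real.norm_of_nonneg (by positivity)]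
  · refine (integrableOn_compl_ball_norm_rpow_neg one_pos hβγ).congr_fun (fun z hz ↦ ?_)
      measurableSet_ball.compl
    have hz : 1 ≤ ‖z‖ := by simpa using hz
    simp only [brokenPower]
    rw [max_eq_left hz, ← Real.rpow_add (by linarith), neg_add]

lemma lintegral_eq_ofReal_pow_mul_lintegral_comp_smul {r : ℝ} (hr : 0 < r) (f : E → ℝ≥0∞) :
    ∫⁻ z, f z ∂μ = ENNReal.ofReal (r ^ finrank ℝ E) * ∫⁻ z, f (r • z) ∂μ := by
  have hmap : ∫⁻ z, f (r • z) ∂μ = ENNReal.ofReal |(r ^ finrank ℝ E)⁻¹| * ∫⁻ z, f z ∂μ := by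
    rw [← smul_eq_mul, ← lintegral_smul_measure, ← Measure.map_addHaar_smul _ hr.ne']
    exact ((Homeomorph.smulOfNeZero r hr.ne').measurableEmbedding.lintegral_map f).symm
  rw [hmap, ← mul_assoc, ← ENNReal.ofReal_mul (by positivity), abs_of_pos (by positivity),
    mul_inv_cancel₀ (by positivity), ENNReal.ofReal_one, one_mul]

lemma powerConvolution_smul {r : ℝ} (hr : 0 < r) (x : E) :
    powerConvolution μ β γ (r • x) =
      ENNReal.ofReal (r ^ (finrank ℝ E - β - γ)) * powerConvolution μ β γ x := by
  have hscale (y : E) : ‖r • x - r • y‖ ^ (-β) * ‖r • y‖ ^ (-γ) =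
      r ^ (-β - γ) * (‖x - y‖ ^ (-β) * ‖y‖ ^ (-γ)) := by
    rw [← smul_sub, norm_smul_of_nonneg hr.le, norm_smul_of_nonneg hr.le,
      Real.mul_rpow hr.le (norm_nonneg _), Real.mul_rpow hr.le (norm_nonneg _),
      sub_eq_add_neg (-β), Real.rpow_add hr]
    ring
  have hpow : r ^ (finrank ℝ E - β - γ) = r ^ finrank ℝ E * r ^ (-β - γ) := by
    rw [← Real.rpow_natCast, ← Real.rpow_add hr]
    ring_nf
  simp only [powerConvolution]
  rw [lintegral_eq_ofReal_pow_mul_lintegral_comp_smul hr]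
  simp only [hscale, ENNReal.ofReal_mul (Real.rpow_nonneg hr.le _)]
  rw [lintegral_const_mul' _ _ ENNReal.ofReal_ne_top, ← mul_assoc,
    ← ENNReal.ofReal_mul (by positivity), hpow]

theorem exists_powerConvolution_le (hβ : β < finrank ℝ E) (hγ : γ < finrank ℝ E)
    (hβγ : finrank ℝ E < β + γ) :
    ∃ C : ℝ≥0, ∀ x : E, x ≠ 0 →
      powerConvolution μ β γ x ≤ C * ENNReal.ofReal (‖x‖ ^ (finrank ℝ E - β - γ)) := by
  have : Nontrivial E := nontrivial_of_finrank_pos (R := ℝ) (by rify; linarith)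
  let I : ℝ≥0∞ := ∫⁻ z, ENNReal.ofReal (brokenPower β γ z) ∂μ +
    ∫⁻ z, ENNReal.ofReal (brokenPower γ β z) ∂μ
  have hI : I ≠ ∞ := ENNReal.add_ne_top.2
    ⟨(integrable_brokenPower hβ hβγ).lintegral_lt_top.ne,
      (integrable_brokenPower hγ (by linarith)).lintegral_lt_top.ne⟩
  have hC : ENNReal.ofReal (2⁻¹ ^ (finrank ℝ E - β - γ)) * I ≠ ∞ :=
    ENNReal.mul_ne_top ENNReal.ofReal_ne_top hI
  refine ⟨(ENNReal.ofReal (2⁻¹ ^ (finrank ℝ E - β - γ)) * I).toNNReal, fun x hx ↦ ?_⟩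
  have hx_pos : 0 < ‖x‖ := norm_pos_iff.2 hx
  let e : E := (‖x‖ * 2⁻¹)⁻¹ • x
  have he : ‖e‖ = 2 := by
    rw [norm_smul_of_nonneg (by positivity)]
    field_simp
  calc powerConvolution μ β γ x = powerConvolution μ β γ ((‖x‖ * 2⁻¹) • e) := by
        rw [smul_inv_smul₀ (by positivity)]
    _ = ENNReal.ofReal ((‖x‖ * 2⁻¹) ^ (finrank ℝ E - β - γ)) * powerConvolution μ β γ e :=
        powerConvolution_smul (by positivity) e
    _ ≤ ENNReal.ofReal ((‖x‖ * 2⁻¹) ^ (finrank ℝ E - β - γ)) * I := by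
        gcongr
        exact powerConvolution_le_of_norm_eq_two (by linarith) (by linarith) he
    _ = _ := by
        rw [ENNReal.coe_toNNReal hC, Real.mul_rpow hx_pos.le (by norm_num),
          ENNReal.ofReal_mul (by positivity)]
        ring

end PowerConvolution

lemma eLpNorm_ofReal_eq_lintegral_rpow_enorm {X F : Type*} [MeasurableSpace X]
    [NormedAddCommGroup F] {μ : Measure X} {p : ℝ} (hp : 0 < p) (f : X → F) :
    eLpNorm f (ENNReal.ofReal p) μ = (∫⁻ x, ‖f x‖ₑ ^ p ∂μ) ^ (1 / p) := by
  rw [eLpNorm_eq_lintegral_rpow_enorm_toReal (by simpa) ENNReal.ofReal_ne_top,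
    ENNReal.toReal_ofReal hp.le]

section SteinWeiss

variable {E : Type*} [NormedAddCommGroup E]

lemma ofReal_norm_rpow_neg_div_mul_rpow {p : ℝ} (hp : 0 < p) (c q : ℝ) (x : E) :
    ENNReal.ofReal (‖x‖ ^ (-(c / (p * q)))) ^ p = ENNReal.ofReal (‖x‖ ^ (-(c / q))) := by
  rw [ENNReal.ofReal_rpow_of_nonneg (by positivity) hp.le, ← Real.rpow_mul (norm_nonneg x)]
  congr 2
  field_simp

variable [NormedSpace ℝ E] {a b : ℝ}

/-- The Stein–Weiss kernel `‖x‖ ^ (-a) * ‖x - y‖ ^ (a + b - n) * ‖y‖ ^ (-b)`, homogeneous of degree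
`-n` with `n = finrank ℝ E`. At `x = 0`, `y = 0` and `x = y` its value follows the conventions for
`0 ^ s` and `0⁻¹`. -/
noncomputable def steinWeissKernel (a b : ℝ) (x y : E) : ℝ :=
  (‖x‖ ^ a * ‖x - y‖ ^ (finrank ℝ E - (a + b)) * ‖y‖ ^ b)⁻¹

lemma steinWeissKernel_swap (x y : E) : steinWeissKernel b a y x = steinWeissKernel a b x y := by
  simp only [steinWeissKernel, norm_sub_rev y x, add_comm b a]
  ring

lemma steinWeissKernel_mul_norm_rpow_neg {s : ℝ} (x : E) {y : E} (hy : y ≠ 0) :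
    steinWeissKernel a b x y * ‖y‖ ^ (-s) =
      ‖x‖ ^ (-a) * (‖x - y‖ ^ (-(finrank ℝ E - (a + b))) * ‖y‖ ^ (-(b + s))) := by
  rw [neg_add b s, Real.rpow_add (norm_pos_iff.2 hy)]
  simp only [steinWeissKernel, mul_inv, Real.rpow_neg (norm_nonneg _)]
  ring

lemma ofReal_mul_norm_div_eq_steinWeissKernel_mul {F G : Type*} [NormedAddCommGroup F]
    [NormedAddCommGroup G] (x y : E) (c : F) (d : G) :
    ENNReal.ofReal (‖c‖ * ‖d‖ /
        (‖x‖ ^ a * ‖x - y‖ ^ (finrank ℝ E - (a + b)) * ‖y‖ ^ b)) =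
      ENNReal.ofReal (steinWeissKernel a b x y) * ‖c‖ₑ * ‖d‖ₑ := by
  rw [← ofReal_norm c, ← ofReal_norm d, ← ENNReal.ofReal_mul' (norm_nonneg c),
    ← ENNReal.ofReal_mul' (norm_nonneg d), steinWeissKernel, div_eq_inv_mul, mul_assoc _ ‖c‖]

variable [MeasurableSpace E] [BorelSpace E] [FiniteDimensional ℝ E] {μ : Measure E}
  [μ.IsAddHaarMeasure]

lemma measurable_steinWeissKernel :
    Measurable (fun z : E × E ↦ steinWeissKernel a b z.1 z.2) := by
  unfold steinWeissKernel
  fun_prop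

lemma exists_lintegral_steinWeissKernel_mul_norm_rpow_neg_le {s : ℝ} (hab : 0 < a + b)
    (has : a < s) (hbs : b + s < finrank ℝ E) :
    ∃ C : ℝ≥0, ∀ x : E, x ≠ 0 →
      ∫⁻ y, ENNReal.ofReal (steinWeissKernel a b x y) * ENNReal.ofReal (‖y‖ ^ (-s)) ∂μ ≤
        C * ENNReal.ofReal (‖x‖ ^ (-s)) := by
  obtain ⟨C, hC⟩ := exists_powerConvolution_le (μ := μ) (β := finrank ℝ E - (a + b)) (γ := b + s)
    (by linarith) hbs (by linarith)
  refine ⟨C, fun x hx ↦ ?_⟩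
  have : Nontrivial E := ⟨x, 0, hx⟩
  calc ∫⁻ y, ENNReal.ofReal (steinWeissKernel a b x y) * ENNReal.ofReal (‖y‖ ^ (-s)) ∂μ
      = ENNReal.ofReal (‖x‖ ^ (-a)) * powerConvolution μ (finrank ℝ E - (a + b)) (b + s) x := by
        rw [powerConvolution, ← lintegral_const_mul' _ _ ENNReal.ofReal_ne_top]
        refine lintegral_congr_ae ?_
        filter_upwards [Measure.ae_ne μ 0] with y hy
        rw [← ENNReal.ofReal_mul' (by positivity), ← ENNReal.ofReal_mul (by positivity),
          steinWeissKernel_mul_norm_rpow_neg x hy]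
    _ ≤ ENNReal.ofReal (‖x‖ ^ (-a)) *
          (C * ENNReal.ofReal (‖x‖ ^ (finrank ℝ E - (finrank ℝ E - (a + b)) - (b + s)))) := by
        gcongr
        exact hC x hx
    _ = C * ENNReal.ofReal (‖x‖ ^ (-s)) := by
        rw [mul_left_comm, ← ENNReal.ofReal_mul (by positivity),
          ← Real.rpow_add (norm_pos_iff.2 hx)]
        ring_nf

theorem exists_lintegral_steinWeissKernel_mul_mul_le {p q : ℝ} (hpq : p.HolderConjugate q)
    (ha : a < finrank ℝ E / q) (hb : b < finrank ℝ E / p) (hab : 0 < a + b) :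
    ∃ C : ℝ≥0, ∀ f g : E → ℝ≥0∞, AEMeasurable f μ → AEMeasurable g μ →
      ∫⁻ z, ENNReal.ofReal (steinWeissKernel a b z.1 z.2) * f z.1 * g z.2 ∂μ.prod μ ≤
        C * (∫⁻ x, f x ^ p ∂μ) ^ (1 / p) * (∫⁻ y, g y ^ q ∂μ) ^ (1 / q) := by
  have hdim : (finrank ℝ E : ℝ) / p + finrank ℝ E / q = finrank ℝ E := by
    rw [div_eq_mul_inv, div_eq_mul_inv, ← mul_add, hpq.inv_add_inv_eq_one, mul_one]
  have : Nontrivial E := nontrivial_of_finrank_pos (R := ℝ) (by rify; linarith)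
  obtain ⟨A, hA⟩ := exists_lintegral_steinWeissKernel_mul_norm_rpow_neg_le (μ := μ) hab ha
    (by linarith)
  obtain ⟨B, hB⟩ := exists_lintegral_steinWeissKernel_mul_norm_rpow_neg_le (μ := μ)
    ((add_comm a b).symm ▸ hab) hb (by linarith)
  let w : E → ℝ≥0∞ := fun x ↦ ENNReal.ofReal (‖x‖ ^ (-(finrank ℝ E / (p * q))))
  have hwp (x : E) : w x ^ p = ENNReal.ofReal (‖x‖ ^ (-(finrank ℝ E / q))) :=
    ofReal_norm_rpow_neg_div_mul_rpow hpq.pos _ q x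
  have hwq (x : E) : w x ^ q = ENNReal.ofReal (‖x‖ ^ (-(finrank ℝ E / p))) := by
    simpa only [w, mul_comm p q] using ofReal_norm_rpow_neg_div_mul_rpow hpq.symm.pos _ p x
  have hw_meas : AEMeasurable w μ := by fun_prop
  have h_ne_zero := Measure.ae_ne μ (0 : E)
  have hw_zero : ∀ᵐ x ∂μ, w x ≠ 0 := by
    filter_upwards [h_ne_zero] with x hx
    simpa [w] using Real.rpow_pos_of_pos (norm_pos_iff.2 hx) _
  have hw_top : ∀ᵐ x ∂μ, w x ≠ ∞ := .of_forall fun _ ↦ ENNReal.ofReal_ne_top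
  refine ⟨A ^ (1 / p) * B ^ (1 / q), fun f g hf hg ↦ ?_⟩
  have hschur := lintegral_prod_mul_mul_le_of_schur (A := A) (B := B) hpq
    (K := fun x y ↦ ENNReal.ofReal (steinWeissKernel a b x y))
    measurable_steinWeissKernel.ennreal_ofReal hw_meas hw_meas hw_zero hw_top hw_zero hw_top
    (h_ne_zero.mono fun x hx ↦ by simpa only [hwp] using hA x hx)
    (h_ne_zero.mono fun y hy ↦ by simpa only [hwq, steinWeissKernel_swap] using hB y hy) hf hg
  rwa [ENNReal.mul_rpow_of_nonneg _ _ hpq.one_div_nonneg,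
    ENNReal.mul_rpow_of_nonneg _ _ hpq.symm.one_div_nonneg, mul_mul_mul_comm, ← mul_assoc,
    ← ENNReal.coe_rpow_of_nonneg _ hpq.one_div_nonneg,
    ← ENNReal.coe_rpow_of_nonneg _ hpq.symm.one_div_nonneg, ← ENNReal.coe_mul] at hschur

theorem stmt_11_general {F G : Type*} [NormedAddCommGroup F] [NormedAddCommGroup G]
    {p q : ℝ} (hpq : p.HolderConjugate q)
    (ha : a < finrank ℝ E / q) (hb : b < finrank ℝ E / p) (hab : 0 < a + b) :
    ∃ C > (0 : ℝ), ∀ (f : E → F) (g : E → G),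
      AEStronglyMeasurable f μ → AEStronglyMeasurable g μ →
      ∫⁻ z : E × E, ENNReal.ofReal (‖f z.1‖ * ‖g z.2‖ /
          (‖z.1‖ ^ a * ‖z.1 - z.2‖ ^ (finrank ℝ E - (a + b)) * ‖z.2‖ ^ b)) ∂μ.prod μ ≤
        ENNReal.ofReal C * eLpNorm f (ENNReal.ofReal p) μ * eLpNorm g (ENNReal.ofReal q) μ := by
  obtain ⟨C, hC⟩ := exists_lintegral_steinWeissKernel_mul_mul_le (μ := μ) hpq ha hb hab
  refine ⟨C + 1, by positivity, fun f g hf hg ↦ ?_⟩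
  simp only [ofReal_mul_norm_div_eq_steinWeissKernel_mul]
  calc ∫⁻ z, ENNReal.ofReal (steinWeissKernel a b z.1 z.2) * ‖f z.1‖ₑ * ‖g z.2‖ₑ ∂μ.prod μ
      ≤ C * eLpNorm f (ENNReal.ofReal p) μ * eLpNorm g (ENNReal.ofReal q) μ := by
        rw [eLpNorm_ofReal_eq_lintegral_rpow_enorm hpq.pos,
          eLpNorm_ofReal_eq_lintegral_rpow_enorm hpq.symm.pos]
        exact hC _ _ hf.enorm hg.enorm
    _ ≤ _ := by
        gcongr
        rw [← ENNReal.ofReal_coe_nnreal]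
        gcongr
        linarith

end SteinWeiss

/-- Boundedness on `L²(ℝⁿ)` of the integral operator with homogeneous kernel
`|x|^{−a}|x−y|^{−(n−α)}|y|^{−b}`, for `0 < α < n`, `a, b < n/2`, `a + b = α`. -/
theorem stmt_11 (n : ℕ) (hn : 1 ≤ n) (α a b : ℝ)
    (hα0 : 0 < α) (hαn : α < n) (ha : a < n / 2) (hb : b < n / 2) (hab : a + b = α) :
    ∃ C > (0 : ℝ), ∀ f g : EuclideanSpace ℝ (Fin n) → ℂ,
      MemLp f 2 → MemLp g 2 →
      (∫⁻ p : EuclideanSpace ℝ (Fin n) × EuclideanSpace ℝ (Fin n),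
          ENNReal.ofReal (‖f p.1‖ * ‖g p.2‖ /
            (‖p.1‖ ^ a * ‖p.1 - p.2‖ ^ ((n : ℝ) - α) * ‖p.2‖ ^ b))) ≤
        ENNReal.ofReal C * eLpNorm f 2 volume * eLpNorm g 2 volume := by
  subst hab
  obtain ⟨C, hC_pos, hC⟩ := stmt_11_general (E := EuclideanSpace ℝ (Fin n)) (μ := volume)
    (F := ℂ) (G := ℂ) .two_two (by simpa using ha) (by simpa using hb) hα0
  exact ⟨C, hC_pos, fun f g hf hg ↦ by
    simpa [Measure.volume_eq_prod] using hC f g hf.1 hg.1⟩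
end

section
/- Let n ≥ 3 and k ∈ ℕ with 2k + 2 < n. Let s, s' ∈ ℝ satisfy s > (4−n)/2 + 2k, s' > (4−n)/2 + 2k, and s + s' ≥ 2k + 2. Then there exists a constant C > 0 such that for all f, g ∈ L²(ℝⁿ), ∫∫_{ℝⁿ×ℝⁿ} |f(x)|·|g(y)| / (⟨x⟩^{s'} · |x−y|^{n−2−2k} · ⟨y⟩^{s}) dx dy ≤ C·‖f‖_{L²}·‖g‖_{L²}. That is, the operator ⟨x⟩^{−s'} A_{2k} ⟨x⟩^{−s}, where A_{2k} has integral kernel proportional to |x−y|^{2k−(n−2)}, is bounded on L²(ℝⁿ). -/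
open MeasureTheory

/-!
Apply the Schur test to the kernel `⟨x⟩^(-s') |x - y|^(-a) ⟨y⟩^(-s)`, `a = n - 2 - 2k`, with both
weights equal to `⟨·⟩^(-n/2)`. Lowering `s` and `s'`, one may assume `s + s' = n - a`. Then both
Schur conditions are instances of the convolution estimate
`∫ |x - y|^(-a) ⟨y⟩^(-b) dy ≲ ⟨x⟩^(n - a - b)` for `a, b < n < a + b`.
For the latter, `|x - y| + ⟨y⟩ ≥ ⟨x⟩` forces the larger of `|x - y|` and `⟨y⟩` to be at least
`ρ = ⟨x⟩ / 2`, so the integrand is at most `φ_{a,b}(|x - y|) + φ_{b,a}(|y|)` where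
`φ_{a,b}(r) = r^(-a) max(ρ, r)^(-b)`, and scaling by `ρ` extracts the power of `⟨x⟩`.
-/

open Module Set
open scoped ENNReal

section SchurTest

variable {X Y F G : Type*} [MeasurableSpace X] [MeasurableSpace Y] {μ : Measure X} {ν : Measure Y}
  [SFinite ν] {A B : ℝ≥0∞}

lemma lintegral_prod_fst_mul_le {φ : X → ℝ≥0∞} (hφ : AEMeasurable φ μ) {L : X × Y → ℝ≥0∞}
    (hL : Measurable L) (hA : ∀ x, ∫⁻ y, L (x, y) ∂ν ≤ A) :
    ∫⁻ z, φ z.1 * L z ∂(μ.prod ν) ≤ A * ∫⁻ x, φ x ∂μ := by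
  have hφL : AEMeasurable (fun z : X × Y => φ z.1 * L z) (μ.prod ν) :=
    hφ.comp_fst.mul hL.aemeasurable
  rw [lintegral_prod _ hφL, ← lintegral_const_mul'' _ hφ]
  refine lintegral_mono fun x => ?_
  calc ∫⁻ y, φ x * L (x, y) ∂ν = φ x * ∫⁻ y, L (x, y) ∂ν := lintegral_const_mul _ (by fun_prop)
    _ ≤ φ x * A := by gcongr; exact hA x
    _ = A * φ x := mul_comm _ _

lemma lintegral_prod_snd_mul_le [SFinite μ] {φ : Y → ℝ≥0∞} (hφ : AEMeasurable φ ν)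
    {L : X × Y → ℝ≥0∞} (hL : Measurable L) (hB : ∀ y, ∫⁻ x, L (x, y) ∂μ ≤ B) :
    ∫⁻ z, φ z.2 * L z ∂(μ.prod ν) ≤ B * ∫⁻ y, φ y ∂ν := by
  rw [← lintegral_prod_swap]
  exact lintegral_prod_fst_mul_le hφ (hL.comp measurable_swap) hB

lemma rpow_half_mul_div_mul_rpow_half_mul_div {K p q : ℝ≥0∞} (hp : p ≠ 0) (hp' : p ≠ ∞)
    (hq : q ≠ 0) (hq' : q ≠ ∞) :
    (K * q / p) ^ (1 / 2 : ℝ) * (K * p / q) ^ (1 / 2 : ℝ) = K := by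
  have hKK : K * q / p * (K * p / q) = K ^ (2 : ℝ) := by
    calc K * q / p * (K * p / q) = K ^ 2 * (p * p⁻¹) * (q * q⁻¹) := by
          simp only [div_eq_mul_inv]; ring
      _ = K ^ (2 : ℝ) := by
          rw [ENNReal.mul_inv_cancel hp hp', ENNReal.mul_inv_cancel hq hq', mul_one, mul_one,
            ENNReal.rpow_two]
  rw [← ENNReal.mul_rpow_of_nonneg _ _ (by norm_num), hKK, ← ENNReal.rpow_mul]
  norm_num

lemma lintegral_enorm_sq_rpow_half [ENorm F] (f : X → F) :
    (∫⁻ x, ‖f x‖ₑ ^ (2 : ℝ) ∂μ) ^ (1 / 2 : ℝ) = eLpNorm f 2 μ := by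
  simp [eLpNorm_eq_lintegral_rpow_enorm_toReal two_ne_zero ENNReal.ofNat_ne_top]

theorem lintegral_prod_enorm_mul_le_of_schur_test [SFinite μ]
    [TopologicalSpace F] [ContinuousENorm F] [TopologicalSpace G] [ContinuousENorm G]
    {K : X × Y → ℝ≥0∞} (hK : Measurable K) {p : X → ℝ≥0∞} (hp : Measurable p)
    (hp0 : ∀ x, p x ≠ 0) (hp_top : ∀ x, p x ≠ ∞) {q : Y → ℝ≥0∞} (hq : Measurable q)
    (hq0 : ∀ y, q y ≠ 0) (hq_top : ∀ y, q y ≠ ∞)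
    (hA : ∀ x, ∫⁻ y, K (x, y) * q y ∂ν ≤ A * p x) (hB : ∀ y, ∫⁻ x, K (x, y) * p x ∂μ ≤ B * q y)
    {f : X → F} (hf : AEStronglyMeasurable f μ) {g : Y → G} (hg : AEStronglyMeasurable g ν) :
    ∫⁻ z, ‖f z.1‖ₑ * ‖g z.2‖ₑ * K z ∂(μ.prod ν) ≤
      A ^ (1 / 2 : ℝ) * B ^ (1 / 2 : ℝ) * eLpNorm f 2 μ * eLpNorm g 2 ν := by
  set L : X × Y → ℝ≥0∞ := fun z => K z * q z.2 / p z.1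
  set M : X × Y → ℝ≥0∞ := fun z => K z * p z.1 / q z.2
  have hL : Measurable L := by fun_prop
  have hM : Measurable M := by fun_prop
  have rpow_half_sq (u v : ℝ≥0∞) : (u * v ^ (1 / 2 : ℝ)) ^ (2 : ℝ) = u ^ (2 : ℝ) * v := by
    rw [ENNReal.mul_rpow_of_nonneg _ _ zero_le_two, ← ENNReal.rpow_mul]
    norm_num
  have hLA (x : X) : ∫⁻ y, L (x, y) ∂ν ≤ A := by
    simp only [L, div_eq_mul_inv]
    rw [lintegral_mul_const _ (by fun_prop), ← div_eq_mul_inv]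
    exact ENNReal.div_le_of_le_mul (hA x)
  have hMB (y : Y) : ∫⁻ x, M (x, y) ∂μ ≤ B := by
    simp only [M, div_eq_mul_inv]
    rw [lintegral_mul_const _ (by fun_prop), ← div_eq_mul_inv]
    exact ENNReal.div_le_of_le_mul (hB y)
  calc ∫⁻ z, ‖f z.1‖ₑ * ‖g z.2‖ₑ * K z ∂(μ.prod ν)
      = ∫⁻ z, (‖f z.1‖ₑ * L z ^ (1 / 2 : ℝ)) * (‖g z.2‖ₑ * M z ^ (1 / 2 : ℝ)) ∂(μ.prod ν) := by
        refine lintegral_congr fun z => ?_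
        rw [mul_mul_mul_comm, rpow_half_mul_div_mul_rpow_half_mul_div (hp0 _) (hp_top _) (hq0 _)
          (hq_top _)]
    _ ≤ (∫⁻ z, ‖f z.1‖ₑ ^ (2 : ℝ) * L z ∂(μ.prod ν)) ^ (1 / 2 : ℝ) *
          (∫⁻ z, ‖g z.2‖ₑ ^ (2 : ℝ) * M z ∂(μ.prod ν)) ^ (1 / 2 : ℝ) := by
        simp only [← rpow_half_sq]
        exact ENNReal.lintegral_mul_le_Lp_mul_Lq _ Real.HolderConjugate.two_two
          (hf.enorm.comp_fst.mul (hL.pow_const _).aemeasurable)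
          (hg.enorm.comp_snd.mul (hM.pow_const _).aemeasurable)
    _ ≤ (A * ∫⁻ x, ‖f x‖ₑ ^ (2 : ℝ) ∂μ) ^ (1 / 2 : ℝ) *
          (B * ∫⁻ y, ‖g y‖ₑ ^ (2 : ℝ) ∂ν) ^ (1 / 2 : ℝ) := by
        gcongr
        · exact lintegral_prod_fst_mul_le (hf.enorm.pow_const _) hL hLA
        · exact lintegral_prod_snd_mul_le (hg.enorm.pow_const _) hM hMB
    _ = A ^ (1 / 2 : ℝ) * B ^ (1 / 2 : ℝ) * eLpNorm f 2 μ * eLpNorm g 2 ν := by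
        rw [ENNReal.mul_rpow_of_nonneg _ _ (by norm_num),
          ENNReal.mul_rpow_of_nonneg _ _ (by norm_num), lintegral_enorm_sq_rpow_half,
          lintegral_enorm_sq_rpow_half]
        ring

end SchurTest

section JapaneseBracket

variable {E : Type*} [SeminormedAddCommGroup E]

/-- The Japanese bracket `⟨x⟩ = (1 + |x|²)^{1/2}`, a smooth substitute for `1 + |x|`. -/
noncomputable def japaneseBracket (x : E) : ℝ := √(1 + ‖x‖ ^ 2)

lemma one_le_japaneseBracket (x : E) : 1 ≤ japaneseBracket x :=
  Real.one_le_sqrt.2 (by simp)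

lemma japaneseBracket_pos (x : E) : 0 < japaneseBracket x :=
  one_pos.trans_le (one_le_japaneseBracket x)

lemma norm_le_japaneseBracket (x : E) : ‖x‖ ≤ japaneseBracket x :=
  Real.le_sqrt_of_sq_le (by simp)

lemma japaneseBracket_rpow (x : E) (t : ℝ) : japaneseBracket x ^ t = (1 + ‖x‖ ^ 2) ^ (t / 2) := by
  rw [japaneseBracket, Real.sqrt_eq_rpow, ← Real.rpow_mul (by positivity), one_div_mul_eq_div]

lemma japaneseBracket_le_norm_sub_add (x y : E) :
    japaneseBracket x ≤ ‖x - y‖ + japaneseBracket y := by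
  have hy := japaneseBracket_pos y
  have hsq : japaneseBracket y ^ 2 = 1 + ‖y‖ ^ 2 := Real.sq_sqrt (by positivity)
  have hx : ‖x‖ ≤ ‖x - y‖ + ‖y‖ := norm_le_norm_sub_add x y
  refine Real.sqrt_le_iff.2 ⟨by positivity, ?_⟩
  calc 1 + ‖x‖ ^ 2 ≤ 1 + (‖x - y‖ + ‖y‖) ^ 2 := by gcongr
    _ = ‖x - y‖ ^ 2 + 2 * ‖x - y‖ * ‖y‖ + (1 + ‖y‖ ^ 2) := by ring
    _ ≤ ‖x - y‖ ^ 2 + 2 * ‖x - y‖ * japaneseBracket y + (1 + ‖y‖ ^ 2) := by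
        gcongr; exact norm_le_japaneseBracket y
    _ = (‖x - y‖ + japaneseBracket y) ^ 2 := by rw [← hsq]; ring

@[fun_prop]
lemma measurable_japaneseBracket [MeasurableSpace E] [OpensMeasurableSpace E] :
    Measurable (japaneseBracket : E → ℝ) := by
  unfold japaneseBracket; fun_prop

end JapaneseBracket

lemma integrableOn_rpow_mul_max_one_rpow {a b : ℝ} (ha : a < 1) (hab : 1 < a + b) :
    IntegrableOn (fun r : ℝ => r ^ (-a) * max 1 r ^ (-b)) (Ioi 0) := by
  rw [← Ioc_union_Ioi_eq_Ioi zero_le_one]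
  refine .union ?_ ?_
  · have near_zero : IntegrableOn (fun r : ℝ => r ^ (-a)) (Ioc 0 1) := by
      rw [integrableOn_Ioc_iff_integrableOn_Ioo, intervalIntegral.integrableOn_Ioo_rpow_iff one_pos]
      linarith
    refine near_zero.congr_fun (fun r hr => ?_) measurableSet_Ioc
    simp [max_eq_left hr.2]
  · have at_infinity : IntegrableOn (fun r : ℝ => r ^ (-a - b)) (Ioi 1) :=
      integrableOn_Ioi_rpow_of_lt (by linarith) one_pos
    refine at_infinity.congr_fun (fun r hr => ?_) measurableSet_Ioi
    have hr : 1 < r := hr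
    simp only [max_eq_right hr.le]
    rw [← Real.rpow_add (by linarith), sub_eq_add_neg]

lemma rpow_neg_mul_max_rpow_neg_eq (a b : ℝ) {ρ r : ℝ} (hρ : 0 < ρ) (hr : 0 ≤ r) :
    r ^ (-a) * max ρ r ^ (-b) =
      ρ ^ (-a - b) * ((ρ⁻¹ * r) ^ (-a) * max 1 (ρ⁻¹ * r) ^ (-b)) := by
  obtain ⟨t, rfl⟩ : ∃ t, r = ρ * t := ⟨ρ⁻¹ * r, (mul_inv_cancel_left₀ hρ.ne' r).symm⟩
  have ht : 0 ≤ t := nonneg_of_mul_nonneg_right hr hρ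
  have hmax : max ρ (ρ * t) = ρ * max 1 t := by rw [mul_max_of_nonneg _ _ hρ.le, mul_one]
  rw [inv_mul_cancel_left₀ hρ.ne', hmax, Real.mul_rpow hρ.le ht,
    Real.mul_rpow hρ.le (by positivity), sub_eq_add_neg, Real.rpow_add hρ]
  ring

lemma rpow_neg_mul_rpow_neg_le {a b ρ t u v : ℝ} (ha : 0 ≤ a) (hb : 0 ≤ b) (hρ : 0 < ρ)
    (ht : 0 < t) (hu : 0 ≤ u) (htv : t ≤ v) (huv : 2 * ρ ≤ u + v) :
    u ^ (-a) * v ^ (-b) ≤ u ^ (-a) * max ρ u ^ (-b) + t ^ (-b) * max ρ t ^ (-a) := by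
  rcases le_total u v with h | h
  · refine le_add_of_le_of_nonneg ?_ (by positivity)
    gcongr u ^ (-a) * ?_
    exact Real.rpow_le_rpow_of_nonpos (by positivity) (max_le (by linarith) h) (by linarith)
  · refine le_add_of_nonneg_of_le (by positivity) ?_
    rw [mul_comm]
    gcongr ?_ * ?_
    · exact Real.rpow_le_rpow_of_nonpos ht htv (by linarith)
    · exact Real.rpow_le_rpow_of_nonpos (by positivity) (max_le (by linarith) (by linarith))
        (by linarith)

lemma exists_mem_Ioc_mem_Ioc_add_eq {l s s' t : ℝ} (hs : l < s) (hs' : l < s') (hl : 2 * l < t)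
    (ht : t ≤ s + s') : ∃ u ∈ Ioc l s, ∃ v ∈ Ioc l s', u + v = t := by
  set u := max (t - s') (min s (t / 2))
  have hlu : l < u := lt_max_of_lt_right (lt_min hs (by linarith))
  have hus : u ≤ s := max_le (by linarith) (min_le_left _ _)
  have hut : u < t - l := max_lt (by linarith) ((min_le_right _ _).trans_lt (by linarith))
  have hus' : t - s' ≤ u := le_max_left _ _
  exact ⟨u, ⟨hlu, hus⟩, t - u, ⟨by linarith, by linarith⟩, by ring⟩

section Convolution

variable {E : Type*} [NormedAddCommGroup E] [NormedSpace ℝ E] [FiniteDimensional ℝ E]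
  [MeasurableSpace E] [BorelSpace E] (μ : Measure E) [μ.IsAddHaarMeasure]

lemma integrable_norm_rpow_mul_max_one_norm_rpow [Nontrivial E] {a b : ℝ} (ha : a < finrank ℝ E)
    (hab : finrank ℝ E < a + b) :
    Integrable (fun z : E => ‖z‖ ^ (-a) * max 1 ‖z‖ ^ (-b)) μ := by
  rw [integrable_fun_norm_addHaar μ (f := fun r => r ^ (-a) * max 1 r ^ (-b))]
  refine (integrableOn_rpow_mul_max_one_rpow (a := a - (finrank ℝ E - 1)) (b := b) (by linarith)
    (by linarith)).congr_fun (fun r hr => ?_) measurableSet_Ioi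
  simp only [smul_eq_mul]
  rw [← mul_assoc, ← Real.rpow_natCast, ← Real.rpow_add hr, Nat.cast_pred finrank_pos]
  ring_nf

lemma lintegral_comp_inv_smul {f : E → ℝ≥0∞} (hf : Measurable f) {ρ : ℝ} (hρ : 0 < ρ) :
    ∫⁻ x, f (ρ⁻¹ • x) ∂μ = ENNReal.ofReal (ρ ^ finrank ℝ E) * ∫⁻ x, f x ∂μ := by
  rw [← lintegral_map hf (measurable_const_smul ρ⁻¹),
    Measure.map_addHaar_smul μ (inv_ne_zero hρ.ne'), lintegral_smul_measure, smul_eq_mul, inv_pow,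
    inv_inv, abs_of_pos (by positivity)]

lemma lintegral_norm_rpow_mul_max_norm_rpow (a b : ℝ) {ρ : ℝ} (hρ : 0 < ρ) :
    ∫⁻ y : E, ENNReal.ofReal (‖y‖ ^ (-a) * max ρ ‖y‖ ^ (-b)) ∂μ =
      ENNReal.ofReal (ρ ^ (finrank ℝ E - a - b)) *
        ∫⁻ z : E, ENNReal.ofReal (‖z‖ ^ (-a) * max 1 ‖z‖ ^ (-b)) ∂μ := by
  set φ : E → ℝ≥0∞ := fun z => ENNReal.ofReal (‖z‖ ^ (-a) * max 1 ‖z‖ ^ (-b))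
  have hφ : Measurable φ := by fun_prop
  calc _ = ∫⁻ y, ENNReal.ofReal (ρ ^ (-a - b)) * φ (ρ⁻¹ • y) ∂μ := by
        refine lintegral_congr fun y => ?_
        rw [← ENNReal.ofReal_mul (by positivity), norm_smul_of_nonneg (by positivity),
          rpow_neg_mul_max_rpow_neg_eq a b hρ (norm_nonneg y)]
    _ = ENNReal.ofReal (ρ ^ (-a - b)) *
          (ENNReal.ofReal (ρ ^ finrank ℝ E) * ∫⁻ z, φ z ∂μ) := by
        rw [lintegral_const_mul _ (by fun_prop), lintegral_comp_inv_smul μ hφ hρ]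
    _ = ENNReal.ofReal (ρ ^ (finrank ℝ E - a - b)) * ∫⁻ z, φ z ∂μ := by
        rw [← mul_assoc, ← ENNReal.ofReal_mul (by positivity), ← Real.rpow_natCast,
          ← Real.rpow_add hρ]
        ring_nf

theorem exists_lintegral_norm_sub_rpow_mul_japaneseBracket_rpow_le [Nontrivial E] {a b : ℝ}
    (ha : a < finrank ℝ E) (hb : b < finrank ℝ E) (hab : finrank ℝ E < a + b) :
    ∃ C : ℝ≥0∞, C ≠ ∞ ∧ ∀ x : E,
      ∫⁻ y, ENNReal.ofReal (‖x - y‖ ^ (-a) * japaneseBracket y ^ (-b)) ∂μ ≤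
        C * ENNReal.ofReal (japaneseBracket x ^ (finrank ℝ E - a - b)) := by
  set I : ℝ → ℝ → ℝ≥0∞ := fun a b =>
    ∫⁻ z : E, ENNReal.ofReal (‖z‖ ^ (-a) * max 1 ‖z‖ ^ (-b)) ∂μ
  have hIab : I a b ≠ ∞ :=
    (integrable_norm_rpow_mul_max_one_norm_rpow μ ha hab).lintegral_lt_top.ne
  have hIba : I b a ≠ ∞ :=
    (integrable_norm_rpow_mul_max_one_norm_rpow μ hb (by linarith)).lintegral_lt_top.ne
  refine ⟨ENNReal.ofReal ((2 : ℝ)⁻¹ ^ (finrank ℝ E - a - b)) * (I a b + I b a),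
    ENNReal.mul_ne_top ENNReal.ofReal_ne_top (ENNReal.add_ne_top.2 ⟨hIab, hIba⟩), fun x => ?_⟩
  set ρ := 2⁻¹ * japaneseBracket x
  have hρ : 0 < ρ := mul_pos (by norm_num) (japaneseBracket_pos x)
  calc ∫⁻ y, ENNReal.ofReal (‖x - y‖ ^ (-a) * japaneseBracket y ^ (-b)) ∂μ
      ≤ ∫⁻ y, (ENNReal.ofReal (‖x - y‖ ^ (-a) * max ρ ‖x - y‖ ^ (-b)) +
          ENNReal.ofReal (‖y‖ ^ (-b) * max ρ ‖y‖ ^ (-a))) ∂μ := by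
        refine lintegral_mono_ae ?_
        -- The pointwise bound fails at `y = 0`, where the real power `0 ^ (-b)` is `0`.
        filter_upwards [Measure.ae_ne μ (0 : E)] with y hy
        rw [← ENNReal.ofReal_add (by positivity) (by positivity)]
        refine ENNReal.ofReal_le_ofReal (rpow_neg_mul_rpow_neg_le (by linarith) (by linarith) hρ
          (norm_pos_iff.2 hy) (norm_nonneg _) (norm_le_japaneseBracket y) ?_)
        calc 2 * ρ = japaneseBracket x := mul_inv_cancel_left₀ two_ne_zero _
          _ ≤ ‖x - y‖ + japaneseBracket y := japaneseBracket_le_norm_sub_add x y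
    _ = ENNReal.ofReal (ρ ^ (finrank ℝ E - a - b)) * (I a b + I b a) := by
        rw [lintegral_add_left (by fun_prop), lintegral_sub_left_eq_self
            (fun y => ENNReal.ofReal (‖y‖ ^ (-a) * max ρ ‖y‖ ^ (-b))) x,
          lintegral_norm_rpow_mul_max_norm_rpow μ a b hρ,
          lintegral_norm_rpow_mul_max_norm_rpow μ b a hρ, sub_right_comm _ b a, mul_add]
    _ = _ := by
        rw [Real.mul_rpow (by norm_num) (japaneseBracket_pos x).le,
          ENNReal.ofReal_mul (by positivity)]
        ring

end Convolution

section WeightedRieszKernel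

variable {E : Type*} [SeminormedAddCommGroup E]

/-- The kernel `⟨x⟩^(-s') |x - y|^(-a) ⟨y⟩^(-s)` of a Riesz potential between polynomial weights.
The exponents come in the order in which their factors appear. -/
noncomputable def weightedRieszKernel (s' a s : ℝ) (x y : E) : ℝ :=
  japaneseBracket x ^ (-s') * ‖x - y‖ ^ (-a) * japaneseBracket y ^ (-s)

lemma weightedRieszKernel_nonneg (s' a s : ℝ) (x y : E) : 0 ≤ weightedRieszKernel s' a s x y := by
  have := japaneseBracket_pos x
  have := japaneseBracket_pos y
  unfold weightedRieszKernel
  positivity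

lemma weightedRieszKernel_comm (s' a s : ℝ) (x y : E) :
    weightedRieszKernel s' a s x y = weightedRieszKernel s a s' y x := by
  simp only [weightedRieszKernel, norm_sub_rev x y]
  ring

lemma weightedRieszKernel_anti {s s' u v : ℝ} (a : ℝ) (hv : v ≤ s') (hu : u ≤ s) (x y : E) :
    weightedRieszKernel s' a s x y ≤ weightedRieszKernel v a u x y := by
  have hx := one_le_japaneseBracket x
  have hy := one_le_japaneseBracket y
  unfold weightedRieszKernel
  gcongr

lemma inv_mul_eq_weightedRieszKernel (s' a s : ℝ) (x y : E) :
    ((1 + ‖x‖ ^ 2) ^ (s' / 2) * ‖x - y‖ ^ a * (1 + ‖y‖ ^ 2) ^ (s / 2))⁻¹ =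
      weightedRieszKernel s' a s x y := by
  simp only [weightedRieszKernel, japaneseBracket_rpow, neg_div, mul_inv]
  rw [Real.rpow_neg (by positivity), Real.rpow_neg (by positivity), Real.rpow_neg (by positivity)]

@[fun_prop]
lemma measurable_weightedRieszKernel [SecondCountableTopology E] [MeasurableSpace E]
    [BorelSpace E] (s' a s : ℝ) :
    Measurable fun z : E × E => weightedRieszKernel s' a s z.1 z.2 := by
  unfold weightedRieszKernel
  fun_prop

end WeightedRieszKernel

section WeightedL2Bound

variable {E : Type*} [NormedAddCommGroup E] [NormedSpace ℝ E] [FiniteDimensional ℝ E]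
  [MeasurableSpace E] [BorelSpace E] (μ : Measure E) [μ.IsAddHaarMeasure]

theorem exists_lintegral_weightedRieszKernel_mul_le [Nontrivial E] {s' a s : ℝ}
    (ha : a < finrank ℝ E) (hs : finrank ℝ E / 2 - a < s) (hs' : finrank ℝ E / 2 - a < s')
    (hss' : s + s' = finrank ℝ E - a) :
    ∃ C : ℝ≥0∞, C ≠ ∞ ∧ ∀ x : E,
      ∫⁻ y, ENNReal.ofReal (weightedRieszKernel s' a s x y) *
          ENNReal.ofReal (japaneseBracket y ^ (-(finrank ℝ E / 2 : ℝ))) ∂μ ≤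
        C * ENNReal.ofReal (japaneseBracket x ^ (-(finrank ℝ E / 2 : ℝ))) := by
  obtain ⟨C, hC, hconv⟩ := exists_lintegral_norm_sub_rpow_mul_japaneseBracket_rpow_le μ
    (b := s + finrank ℝ E / 2) ha (by linarith) (by linarith)
  refine ⟨C, hC, fun x => ?_⟩
  have hx := japaneseBracket_pos x
  calc _ = ∫⁻ y, ENNReal.ofReal (japaneseBracket x ^ (-s')) * ENNReal.ofReal
          (‖x - y‖ ^ (-a) * japaneseBracket y ^ (-(s + finrank ℝ E / 2))) ∂μ := by
        refine lintegral_congr fun y => ?_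
        rw [← ENNReal.ofReal_mul (weightedRieszKernel_nonneg ..),
          ← ENNReal.ofReal_mul (by positivity), neg_add, Real.rpow_add (japaneseBracket_pos y),
          weightedRieszKernel]
        ring_nf
    _ ≤ ENNReal.ofReal (japaneseBracket x ^ (-s')) * (C * ENNReal.ofReal
          (japaneseBracket x ^ (finrank ℝ E - a - (s + finrank ℝ E / 2)))) := by
        rw [lintegral_const_mul' _ _ ENNReal.ofReal_ne_top]
        gcongr
        exact hconv x
    _ = C * ENNReal.ofReal (japaneseBracket x ^ (-(finrank ℝ E / 2 : ℝ))) := by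
        rw [mul_left_comm, ← ENNReal.ofReal_mul (by positivity), ← Real.rpow_add hx]
        congr 3
        linarith

theorem exists_lintegral_prod_enorm_mul_weightedRieszKernel_le [Nontrivial E]
    {F G : Type*} [TopologicalSpace F] [ContinuousENorm F] [TopologicalSpace G] [ContinuousENorm G]
    {s' a s : ℝ}
    (ha : a < finrank ℝ E) (hs : finrank ℝ E / 2 - a < s) (hs' : finrank ℝ E / 2 - a < s')
    (hss' : s + s' = finrank ℝ E - a) :
    ∃ C : ℝ≥0∞, C ≠ ∞ ∧ ∀ (f : E → F) (g : E → G),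
      AEStronglyMeasurable f μ → AEStronglyMeasurable g μ →
      ∫⁻ z, ‖f z.1‖ₑ * ‖g z.2‖ₑ * ENNReal.ofReal (weightedRieszKernel s' a s z.1 z.2) ∂(μ.prod μ) ≤
        C * eLpNorm f 2 μ * eLpNorm g 2 μ := by
  obtain ⟨A, hA_top, hA⟩ := exists_lintegral_weightedRieszKernel_mul_le μ ha hs hs' hss'
  obtain ⟨B, hB_top, hB⟩ :=
    exists_lintegral_weightedRieszKernel_mul_le μ ha hs' hs (by rw [add_comm, hss'])
  have hweight (x : E) : 0 < japaneseBracket x ^ (-(finrank ℝ E / 2 : ℝ)) :=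
    Real.rpow_pos_of_pos (japaneseBracket_pos x) _
  refine ⟨A ^ (1 / 2 : ℝ) * B ^ (1 / 2 : ℝ), by finiteness, fun f g hf hg => ?_⟩
  refine lintegral_prod_enorm_mul_le_of_schur_test (by fun_prop) (by fun_prop)
    (fun x => (ENNReal.ofReal_pos.2 (hweight x)).ne') (fun x => ENNReal.ofReal_ne_top)
    (by fun_prop) (fun y => (ENNReal.ofReal_pos.2 (hweight y)).ne')
    (fun y => ENNReal.ofReal_ne_top) hA (fun y => ?_) hf hg
  simpa only [weightedRieszKernel_comm s' a s] using hB y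

end WeightedL2Bound

theorem stmt_12_general {E F G : Type*} [NormedAddCommGroup E] [NormedSpace ℝ E]
    [FiniteDimensional ℝ E] [MeasurableSpace E] [BorelSpace E] (μ : Measure E) [μ.IsAddHaarMeasure]
    [SeminormedAddCommGroup F] [SeminormedAddCommGroup G] {s' a s : ℝ} (ha0 : 0 < a)
    (ha : a < finrank ℝ E) (hs : finrank ℝ E / 2 - a < s) (hs' : finrank ℝ E / 2 - a < s')
    (hss' : finrank ℝ E - a ≤ s + s') :
    ∃ C > (0 : ℝ), ∀ (f : E → F) (g : E → G),
      AEStronglyMeasurable f μ → AEStronglyMeasurable g μ →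
      ∫⁻ p, ENNReal.ofReal (‖f p.1‖ * ‖g p.2‖ /
          ((1 + ‖p.1‖ ^ 2) ^ (s' / 2) * ‖p.1 - p.2‖ ^ a * (1 + ‖p.2‖ ^ 2) ^ (s / 2))) ∂(μ.prod μ) ≤
        ENNReal.ofReal C * eLpNorm f 2 μ * eLpNorm g 2 μ := by
  have : Nontrivial E := nontrivial_of_finrank_pos (R := ℝ) (by exact_mod_cast ha0.trans ha)
  obtain ⟨u, ⟨hu, hus⟩, v, ⟨hv, hvs'⟩, huv⟩ :=
    exists_mem_Ioc_mem_Ioc_add_eq hs hs' (by linarith) hss'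
  obtain ⟨C, hC_top, hC⟩ :=
    exists_lintegral_prod_enorm_mul_weightedRieszKernel_le (F := F) (G := G) μ ha hu hv huv
  refine ⟨C.toReal + 1, by positivity, fun f g hf hg => ?_⟩
  calc _ ≤ ∫⁻ z, ‖f z.1‖ₑ * ‖g z.2‖ₑ * ENNReal.ofReal (weightedRieszKernel v a u z.1 z.2)
          ∂(μ.prod μ) := by
        refine lintegral_mono fun z => ?_
        rw [div_eq_mul_inv, inv_mul_eq_weightedRieszKernel, ENNReal.ofReal_mul (by positivity),
          ENNReal.ofReal_mul (norm_nonneg _), ofReal_norm, ofReal_norm]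
        gcongr
        exact weightedRieszKernel_anti a hvs' hus _ _
    _ ≤ C * eLpNorm f 2 μ * eLpNorm g 2 μ := hC f g hf hg
    _ ≤ ENNReal.ofReal (C.toReal + 1) * eLpNorm f 2 μ * eLpNorm g 2 μ := by
        gcongr
        exact ENNReal.le_ofReal_iff_toReal_le hC_top (by positivity) |>.2 (by linarith)

/-- Boundedness on `L²(ℝⁿ)` of `⟨x⟩^{−s'} A_{2k} ⟨x⟩^{−s}` where `A_{2k}` has kernel
`|x−y|^{2k−(n−2)}`, for `n ≥ 3`, `2k + 2 < n`, `s, s' > (4−n)/2 + 2k`, `s + s' ≥ 2k + 2`. -/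
theorem stmt_12 (n : ℕ) (hn : 3 ≤ n) (k : ℕ) (hk : 2 * k + 2 < n) (s s' : ℝ)
    (hs : s > (4 - (n : ℝ)) / 2 + 2 * k) (hs' : s' > (4 - (n : ℝ)) / 2 + 2 * k)
    (hss' : s + s' ≥ 2 * k + 2) :
    ∃ C > (0 : ℝ), ∀ f g : EuclideanSpace ℝ (Fin n) → ℂ,
      MemLp f 2 → MemLp g 2 →
      (∫⁻ p : EuclideanSpace ℝ (Fin n) × EuclideanSpace ℝ (Fin n),
          ENNReal.ofReal (‖f p.1‖ * ‖g p.2‖ /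
            ((1 + ‖p.1‖ ^ 2) ^ (s' / 2) * ‖p.1 - p.2‖ ^ ((n : ℝ) - 2 - 2 * k) *
              (1 + ‖p.2‖ ^ 2) ^ (s / 2)))) ≤
        ENNReal.ofReal C * eLpNorm f 2 volume * eLpNorm g 2 volume := by
  have hk : (2 * k + 2 : ℝ) < n := by exact_mod_cast hk
  have hdim : (finrank ℝ (EuclideanSpace ℝ (Fin n)) : ℝ) = n := by simp
  obtain ⟨C, hC, hle⟩ := stmt_12_general (E := EuclideanSpace ℝ (Fin n)) (F := ℂ) (G := ℂ) volume
    (s' := s') (a := n - 2 - 2 * k) (s := s) (by linarith)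
    (by linarith [k.cast_nonneg (α := ℝ)]) (by linarith) (by linarith) (by linarith)
  exact ⟨C, hC, fun f g hf hg => hle f g hf.1 hg.1⟩
end
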